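/- (Bass–Connell–Wright) Let F(z) = z + H(z) be a polynomial map with H homogeneous of degree d ≥ 2. If (JH)^2 = 0 (the square of the Jacobian matrix of H is the zero matrix), then the formal inverse map of F is G(z) = z - H(z). -/

import Mathlib

noncomputable section

/-- The Jacobian matrix `(∂P_i/∂z_j)` of a polynomial map `P`. -/
def jacP {n : ℕ} (P : Fin n → MvPolynomial (Fin n) ℂ) :
    Matrix (Fin n) (Fin n) (MvPolynomial (Fin n) ℂ) :=
  Matrix.of fun i j => MvPolynomial.pderiv j (P i)

open MvPolynomial in
lemma D_H_zero {n d : ℕ} (hd : 2 ≤ d) (H : Fin n → MvPolynomial (Fin n) ℂ)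
    (hH : ∀ i, (H i).IsHomogeneous d)
    (hJH2 : jacP H * jacP H = 0) (i : Fin n) : mkDerivation ℂ H (H i) = 0 := by
  have hD : ∀ P, mkDerivation ℂ H P = ∑ j, H j * pderiv j P := by
    intro P
    induction P using MvPolynomial.induction_on with
    | C a => simp
    | add p q hp hq => simp only [map_add, hp, hq, mul_add, Finset.sum_add_distrib]
    | mul_X p j hp =>
      rw [Derivation.leibniz, hp, mkDerivation_X]
      simp only [Derivation.leibniz, smul_eq_mul, mul_add, Finset.sum_add_distrib, pderiv_X,
        Pi.single_apply, mul_ite, mul_one, mul_zero, Finset.sum_ite_eq,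
        Finset.mem_univ, if_true, Finset.mul_sum]
      congr 1
      · ring
      · exact Finset.sum_congr rfl fun k _ => by ring
  have hE : ∀ j, ∑ k, X k * pderiv k (H j) = (d : MvPolynomial (Fin n) ℂ) * H j := by
    intro j
    rw [(hH j).sum_X_mul_pderiv, nsmul_eq_mul]
  have hd0 : (d : MvPolynomial (Fin n) ℂ) ≠ 0 := by
    exact_mod_cast (by omega : d ≠ 0)
  apply (mul_eq_zero.mp (_ : (d : MvPolynomial (Fin n) ℂ) * _ = 0)).resolve_left hd0
  rw [hD, Finset.mul_sum]
  have h2 : ∀ k, ∑ j, pderiv j (H i) * pderiv k (H j) = 0 := by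
    intro k
    have := congrFun (congrFun hJH2 i) k
    simpa [Matrix.mul_apply, jacP] using this
  calc ∑ j, (d : MvPolynomial (Fin n) ℂ) * (H j * pderiv j (H i))
      = ∑ j, ∑ k, X k * (pderiv j (H i) * pderiv k (H j)) := by
        refine Finset.sum_congr rfl fun j _ => ?_
        rw [← mul_assoc, ← hE, Finset.sum_mul]
        exact Finset.sum_congr rfl fun k _ => by ring
    _ = ∑ k, X k * ∑ j, (pderiv j (H i) * pderiv k (H j)) := by
        rw [Finset.sum_comm]
        simp_rw [Finset.mul_sum]
    _ = 0 := by simp [h2]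

open MvPolynomial in
lemma flow {n : ℕ} (H : Fin n → MvPolynomial (Fin n) ℂ)
    (h0 : ∀ i, mkDerivation ℂ H (H i) = 0) (i : Fin n) :
    aeval (fun j => Polynomial.C (X j) + Polynomial.X * Polynomial.C (H j)) (H i)
      = (Polynomial.C (H i) : Polynomial (MvPolynomial (Fin n) ℂ)) := by
  set φ : MvPolynomial (Fin n) ℂ →ₐ[ℂ] Polynomial (MvPolynomial (Fin n) ℂ) :=
    aeval (fun j => Polynomial.C (X j) + Polynomial.X * Polynomial.C (H j)) with hφ
  have hX : ∀ j, φ (X j) = Polynomial.C (X j) + Polynomial.X * Polynomial.C (H j) := by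
    intro j
    simp [hφ]
  have key : ∀ P, ∀ k, (φ P).coeff (k + 1) * (k + 1)
      = mkDerivation ℂ H ((φ P).coeff k) := by
    intro P
    induction P using MvPolynomial.induction_on with
    | C a =>
      intro k
      have : φ (C a) = Polynomial.C (C a) := by
        rw [hφ, aeval_C]; rfl
      rw [this]
      cases k <;> simp [Polynomial.coeff_C]
    | add p q hp hq =>
      intro k
      simp only [map_add, Polynomial.coeff_add, add_mul, hp, hq]
    | mul_X p j hp =>
      intro k
      have e : φ (p * X j) = φ p * Polynomial.C (X j) + φ p * Polynomial.C (H j) * Polynomial.X := by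
        rw [map_mul, hX]
        ring
      rw [e]
      cases k with
      | zero =>
        have := hp 0
        simp [Derivation.leibniz, mkDerivation_X] at this ⊢
        rw [← this]
        ring
      | succ k =>
        have h1 := hp k
        have h2 := hp (k + 1)
        simp only [Polynomial.coeff_add, Polynomial.coeff_mul_C, Polynomial.coeff_mul_X, map_add,
          Derivation.leibniz, smul_eq_mul, mkDerivation_X, h0, ← h1, ← h2]
        push_cast
        ring
  have hc0 : ∀ P, (φ P).coeff 0 = P := by
    intro P
    induction P using MvPolynomial.induction_on with
    | C a =>
      have : φ (C a) = Polynomial.C (C a) := by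
        rw [hφ, aeval_C]; rfl
      rw [this]; simp
    | add p q hp hq => rw [map_add, Polynomial.coeff_add, hp, hq]
    | mul_X p j hp => rw [map_mul, Polynomial.mul_coeff_zero, hp, hX]; simp
  have hs : ∀ k, (φ (H i)).coeff (k + 1) = 0 := by
    intro k
    have hk : ∀ k : ℕ, ((k : MvPolynomial (Fin n) ℂ) + 1) ≠ 0 := fun k => by
      exact_mod_cast Nat.succ_ne_zero k
    induction k with
    | zero =>
      apply (mul_eq_zero.mp (_ : _ * (((0 : ℕ) : MvPolynomial (Fin n) ℂ) + 1) = 0)).resolve_right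
        (hk 0)
      rw [key, hc0, h0]
    | succ m ih =>
      apply (mul_eq_zero.mp
        (_ : _ * (((m + 1 : ℕ) : MvPolynomial (Fin n) ℂ) + 1) = 0)).resolve_right (hk (m + 1))
      rw [key, ih, map_zero]
  ext1 k
  cases k with
  | zero => rw [hc0]; simp
  | succ m => rw [hs, Polynomial.coeff_C_succ]

open MvPolynomial in
lemma bind_H {n : ℕ} (H : Fin n → MvPolynomial (Fin n) ℂ)
    (h0 : ∀ i, mkDerivation ℂ H (H i) = 0) (c : MvPolynomial (Fin n) ℂ) (i : Fin n) :
    bind₁ (fun j => X j + c * H j) (H i) = H i := by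
  have h := congrArg ((Polynomial.aeval (R := MvPolynomial (Fin n) ℂ) c).restrictScalars ℂ)
    (flow H h0 i)
  rw [← AlgHom.comp_apply, MvPolynomial.comp_aeval] at h
  have e : (fun j => X j + c * H j) = fun j =>
      ((Polynomial.aeval (R := MvPolynomial (Fin n) ℂ) c).restrictScalars ℂ)
        (Polynomial.C (X j) + Polynomial.X * Polynomial.C (H j)) := by
    funext j
    simp
    ring
  rw [bind₁, e]
  refine h.trans ?_
  simp

/-- (Bass–Connell–Wright) If `H` is homogeneous of degree `d ≥ 2` and `(JH)² = 0`, then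
the formal inverse of `F(z) = z + H(z)` is `G(z) = z - H(z)`. -/
theorem stmt16 (n d : ℕ) (hd : 2 ≤ d) (H : Fin n → MvPolynomial (Fin n) ℂ)
    (hH : ∀ i, (H i).IsHomogeneous d)
    (hJH2 : jacP H * jacP H = 0) :
    (∀ i, MvPolynomial.bind₁ (fun j => MvPolynomial.X j - H j)
        (MvPolynomial.X i + H i) = MvPolynomial.X i)
    ∧ (∀ i, MvPolynomial.bind₁ (fun j => MvPolynomial.X j + H j)
        (MvPolynomial.X i - H i) = MvPolynomial.X i) := by
  have h0 := D_H_zero hd H hH hJH2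
  have hp := bind_H H h0 1
  have hm := bind_H H h0 (-1)
  simp only [one_mul, neg_one_mul, ← sub_eq_add_neg] at hp hm
  constructor
  · intro i
    simp [hm i]
  · intro i
    simp [hp i]
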